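/- Wavelet-tree range-restriction correctness: with L, W, L₀, L₁ as above, for any interval [b..e] of L, the set of distinct symbols of the lower half occurring in L[b..e] equals the set of distinct symbols occurring in L₀[rank₀(W,b−1)+1 .. rank₀(W,e)], and similarly the distinct upper-half symbols in L[b..e] equal the distinct symbols in L₁[rank₁(W,b−1)+1 .. rank₁(W,e)]. -/

import Mathlib

/-- The strSlice `S[b..e]` of a string (1-based, inclusive). -/
def strSlice {α : Type*} (S : List α) (b e : ℕ) : List α := (S.take e).drop (b - 1)

section Filter

variable {α : Type*} (p : α → Bool) (L : List α)

theorem take_countP_take_filter (n : ℕ) :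
    (L.filter p).take ((L.take n).countP p) = (L.take n).filter p := by
  rw [List.countP_eq_length_filter]
  exact (List.prefix_iff_eq_take.mp ((List.take_prefix n L).filter p)).symm

theorem drop_countP_take_filter (n : ℕ) :
    (L.filter p).drop ((L.take n).countP p) = (L.drop n).filter p := by
  have split_filter : L.filter p = (L.take n).filter p ++ (L.drop n).filter p := by
    rw [← List.filter_append, List.take_append_drop]
  rw [split_filter, List.countP_eq_length_filter, List.drop_left]

theorem strSlice_eq_nil {b e : ℕ} (heb : e < b) : strSlice L b e = [] :=
  List.drop_eq_nil_of_le ((List.length_take_le e L).trans (Nat.le_sub_one_of_lt heb))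

theorem strSlice_filter (m e : ℕ) :
    strSlice (L.filter p) ((L.take m).countP p + 1) ((L.take e).countP p) =
      (strSlice L (m + 1) e).filter p := by
  rcases le_total m e with hme | hem
  · have take_m : L.take m = (L.take e).take m := by rw [List.take_take, min_eq_left hme]
    rw [strSlice, strSlice, take_countP_take_filter, take_m, Nat.add_sub_cancel,
      Nat.add_sub_cancel, drop_countP_take_filter]
  · have countP_le : (L.take e).countP p ≤ (L.take m).countP p :=
      (List.take_sublist_take_left hem).countP_le
    rw [strSlice_eq_nil _ (Nat.lt_succ_of_le countP_le), strSlice_eq_nil _ (Nat.lt_succ_of_le hem),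
      List.filter_nil]

end Filter

theorem count_take_map {α β : Type*} [DecidableEq β] (f : α → β) (L : List α) (s : β) (n : ℕ) :
    ((L.map f).take n).count s = (L.take n).countP (fun a => decide (f a = s)) := by
  rw [← List.map_take, List.count_eq_countP, List.countP_map]
  rfl

/-- `L.map f` plays the role of `W`, with labels from any alphabet instead of bits. The interval
starts at `m + 1`, so that the 1-based index `b` and the truncated `b - 1` do not occur. -/
theorem wavelet_range_restriction_general {α β : Type*} [DecidableEq β] (f : α → β)
    (L : List α) (s : β) (m e : ℕ) :
    {c | f c = s ∧ c ∈ strSlice L (m + 1) e} =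
      {c | c ∈ strSlice (L.filter (fun a => decide (f a = s)))
        (((L.map f).take m).count s + 1) (((L.map f).take e).count s)} := by
  ext c
  simp only [count_take_map, strSlice_filter, Set.mem_ofPred_eq, List.mem_filter,
    decide_eq_true_eq, and_comm]

/-- wavelet-tree range-restriction correctness. For an interval
`[b..e]` of `L`, the distinct lower-half symbols occurring in `L[b..e]` are
exactly the distinct symbols occurring in
`L₀[rank₀(W,b−1)+1 .. rank₀(W,e)]`, and similarly the distinct upper-half
symbols in `L[b..e]` are those occurring in
`L₁[rank₁(W,b−1)+1 .. rank₁(W,e)]`. -/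
theorem wavelet_range_restriction (k : ℕ) (L : List ℕ)
    (hL : ∀ a ∈ L, 1 ≤ a ∧ a ≤ 2 * k)
    (W : List Bool) (hW : W = L.map (fun a => decide (k < a)))
    (L₀ L₁ : List ℕ)
    (hL₀ : L₀ = L.filter (fun a => decide (a ≤ k)))
    (hL₁ : L₁ = L.filter (fun a => decide (k < a)))
    (b e : ℕ) (hb : 1 ≤ b) (he : e ≤ L.length) :
    {c | c ≤ k ∧ c ∈ strSlice L b e} =
      {c | c ∈ strSlice L₀ ((W.take (b - 1)).count false + 1) ((W.take e).count false)} ∧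
    {c | k < c ∧ c ∈ strSlice L b e} =
      {c | c ∈ strSlice L₁ ((W.take (b - 1)).count true + 1) ((W.take e).count true)} := by
  obtain ⟨m, rfl⟩ := Nat.exists_eq_add_of_le' hb
  subst hW hL₀ hL₁
  have restrict := fun s => wavelet_range_restriction_general (fun a => decide (k < a)) L s m e
  simpa using And.intro (restrict false) (restrict true)
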